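/- Let f : ℝ^d → ℝ be convex, differentiable and L-smooth with a minimizer x* and f* = f(x*). Let η > 0 with η ≤ 1/(4L), let (g̃_t)_{t≥1} be vectors in ℝ^d, and define iterates x_{t+1} = x_t − η·g̃_t from some x_1 ∈ ℝ^d, with θ_t = g̃_t − ∇f(x_t) and Δ_t = f(x_t) − f*. Then for every k ≥ 1: ∑_{t=1}^{k} η·Δ_t ≤ ‖x_1 − x*‖² − ‖x_{k+1} − x*‖² + 2·∑_{t=1}^{k} η²·‖θ_t‖² − 2·∑_{t=1}^{k} η·⟨θ_t, x_t − x*⟩. -/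

import Mathlib

open scoped RealInnerProductSpace
open Finset

section Smooth

variable {F : Type*} [NormedAddCommGroup F] [InnerProductSpace ℝ F] [CompleteSpace F] {f : F → ℝ}

theorem DifferentiableAt.hasDerivAt_comp_add_smul {x v : F} {s : ℝ}
    (hf : DifferentiableAt ℝ f (x + s • v)) :
    HasDerivAt (fun r : ℝ => f (x + r • v)) ⟪gradient f (x + s • v), v⟫ s := by
  have hline : HasDerivAt (fun r : ℝ => x + r • v) v s := by
    simpa using ((hasDerivAt_id s).smul_const v).const_add x
  rw [inner_gradient_left]
  exact hf.hasFDerivAt.comp_hasDerivAt s hline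

/-- First-order characterization of convexity. -/
theorem ConvexOn.sub_le_inner_gradient (hconv : ConvexOn ℝ Set.univ f) {x : F}
    (hf : DifferentiableAt ℝ f x) (y : F) :
    f x - f y ≤ ⟪gradient f x, x - y⟫ := by
  have hline : ConvexOn ℝ Set.univ (fun r : ℝ => f (x + r • (y - x))) := by
    have h := hconv.comp_affineMap (AffineMap.lineMap (k := ℝ) x y)
    simpa [Function.comp_def, AffineMap.lineMap_apply, add_comm] using h
  have hderiv : HasDerivAt (fun r : ℝ => f (x + r • (y - x))) ⟪gradient f x, y - x⟫ 0 := by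
    simpa using DifferentiableAt.hasDerivAt_comp_add_smul (f := f) (x := x) (v := y - x) (s := 0)
      (by simpa using hf)
  have h := hline.le_slope_of_hasDerivAt (Set.mem_univ _) (Set.mem_univ _) zero_lt_one hderiv
  simp only [slope_def_field, one_smul, add_sub_cancel, zero_smul, add_zero, sub_zero,
    div_one] at h
  rw [← neg_sub y x, inner_neg_right]
  linarith

/-- The descent lemma: a function with `L`-Lipschitz gradient lies below its quadratic model. -/
theorem le_add_inner_gradient_add_sq {L : ℝ} (hdiff : Differentiable ℝ f)
    (hsmooth : ∀ x y, ‖gradient f x - gradient f y‖ ≤ L * ‖x - y‖) (x v : F) :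
    f (x + v) ≤ f x + ⟪gradient f x, v⟫ + L / 2 * ‖v‖ ^ 2 := by
  let φ : ℝ → ℝ := fun s => f (x + s • v) - s * ⟪gradient f x, v⟫ - s ^ 2 * (L / 2 * ‖v‖ ^ 2)
  have hφ (s : ℝ) : HasDerivAt φ
      (⟪gradient f (x + s • v), v⟫ - ⟪gradient f x, v⟫ - 2 * s * (L / 2 * ‖v‖ ^ 2)) s := by
    have h := (((hdiff (x + s • v)).hasDerivAt_comp_add_smul).sub
      ((hasDerivAt_id s).mul_const ⟪gradient f x, v⟫)).sub
      ((hasDerivAt_pow 2 s).mul_const (L / 2 * ‖v‖ ^ 2))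
    simpa [φ, Pi.sub_def] using h
  have hanti : AntitoneOn φ (Set.Ici 0) := by
    refine antitoneOn_of_deriv_nonpos (convex_Ici 0)
      (fun s _ => (hφ s).continuousAt.continuousWithinAt)
      (fun s _ => (hφ s).differentiableAt.differentiableWithinAt) fun s hs => ?_
    rw [interior_Ici, Set.mem_Ioi] at hs
    have hlip := hsmooth (x + s • v) x
    rw [add_sub_cancel_left, norm_smul, Real.norm_of_nonneg hs.le] at hlip
    have hcs := (real_inner_le_norm (gradient f (x + s • v) - gradient f x) v).trans
      (mul_le_mul_of_nonneg_right hlip (norm_nonneg v))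
    rw [inner_sub_left] at hcs
    rw [(hφ s).deriv]
    linarith
  have h := hanti (Set.mem_Ici.2 le_rfl) (Set.mem_Ici.2 zero_le_one) zero_le_one
  simp only [φ, one_smul, zero_smul, add_zero] at h
  linarith

/-- The squared gradient norm is controlled by the gap to any lower bound. -/
theorem norm_gradient_sq_le {L : ℝ} (hL : 0 < L) (hdiff : Differentiable ℝ f)
    (hsmooth : ∀ x y, ‖gradient f x - gradient f y‖ ≤ L * ‖x - y‖)
    {m : ℝ} (hm : ∀ y, m ≤ f y) (x : F) :
    ‖gradient f x‖ ^ 2 ≤ 2 * L * (f x - m) := by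
  have h := (hm _).trans (le_add_inner_gradient_add_sq hdiff hsmooth x (-(L⁻¹ • gradient f x)))
  rw [inner_neg_right, real_inner_smul_right, real_inner_self_eq_norm_sq, norm_neg, norm_smul,
    mul_pow, Real.norm_of_nonneg (inv_nonneg.2 hL.le)] at h
  have hquad : L / 2 * (L⁻¹ ^ 2 * ‖gradient f x‖ ^ 2) = L⁻¹ * ‖gradient f x‖ ^ 2 / 2 := by
    field_simp
  have hscaled : L⁻¹ * ‖gradient f x‖ ^ 2 ≤ 2 * (f x - m) := by linarith
  rw [inv_mul_le_iff₀ hL] at hscaled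
  linarith

/-- One step of gradient descent with the inexact gradient `g`. -/
theorem inexact_gradient_step_bound {L η : ℝ} (hL : 0 < L) (hconv : ConvexOn ℝ Set.univ f)
    (hdiff : Differentiable ℝ f)
    (hsmooth : ∀ x y, ‖gradient f x - gradient f y‖ ≤ L * ‖x - y‖)
    {z : F} (hmin : ∀ y, f z ≤ f y) (hη0 : 0 < η) (hη : η ≤ 1 / (4 * L)) (x g : F) :
    η * (f x - f z) ≤ ‖x - z‖ ^ 2 - ‖x - η • g - z‖ ^ 2
      + 2 * (η ^ 2 * ‖g - gradient f x‖ ^ 2) - 2 * (η * ⟪g - gradient f x, x - z⟫) := by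
  have hexpand : ‖x - η • g - z‖ ^ 2 = ‖x - z‖ ^ 2 - 2 * (η * ⟪g, x - z⟫) + η ^ 2 * ‖g‖ ^ 2 := by
    rw [sub_right_comm, norm_sub_sq_real, real_inner_smul_right, real_inner_comm, norm_smul,
      mul_pow, Real.norm_eq_abs, sq_abs]
  have hsplit : ‖g‖ ^ 2 ≤ 2 * ‖g - gradient f x‖ ^ 2 + 2 * ‖gradient f x‖ ^ 2 := by
    have h := parallelogram_law_with_norm ℝ (g - gradient f x) (gradient f x)
    rw [sub_add_cancel] at h
    nlinarith [mul_self_nonneg ‖g - gradient f x - gradient f x‖]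
  have hgrad := norm_gradient_sq_le hL hdiff hsmooth hmin x
  have hfirst := mul_le_mul_of_nonneg_left (hconv.sub_le_inner_gradient (hdiff x) z) hη0.le
  have hstep : η * (4 * L) ≤ 1 := (le_div_iff₀ (by positivity)).1 hη
  have hg : η ^ 2 * ‖g‖ ^ 2 ≤
      2 * (η ^ 2 * ‖g - gradient f x‖ ^ 2) + η * (4 * L) * (η * (f x - f z)) := by
    nlinarith [mul_le_mul_of_nonneg_left
      (hsplit.trans (add_le_add_right (mul_le_mul_of_nonneg_left hgrad zero_le_two) _))
      (sq_nonneg η)]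
  have hgap := mul_le_mul_of_nonneg_right hstep (mul_nonneg hη0.le (sub_nonneg.2 (hmin x)))
  rw [hexpand, inner_sub_left]
  linarith

end Smooth

/-- Summed inequality for (clipped) SGD on convex smooth objectives. -/
theorem convex_summed_bound
    {d : ℕ} (f : EuclideanSpace ℝ (Fin d) → ℝ)
    (L : ℝ) (hL : 0 < L)
    (hconv : ConvexOn ℝ Set.univ f)
    (hdiff : Differentiable ℝ f)
    (hsmooth : ∀ x y, ‖gradient f x - gradient f y‖ ≤ L * ‖x - y‖)
    (xstar : EuclideanSpace ℝ (Fin d)) (hmin : ∀ y, f xstar ≤ f y)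
    (η : ℝ) (hη0 : 0 < η) (hη : η ≤ 1 / (4 * L))
    (x gt : ℕ → EuclideanSpace ℝ (Fin d))
    (hupdate : ∀ t, 1 ≤ t → x (t + 1) = x t - η • gt t)
    (θ : ℕ → EuclideanSpace ℝ (Fin d)) (hθ : ∀ t, θ t = gt t - gradient f (x t)) :
    ∀ k, 1 ≤ k →
      ∑ t ∈ Icc 1 k, η * (f (x t) - f xstar) ≤
        ‖x 1 - xstar‖ ^ 2 - ‖x (k + 1) - xstar‖ ^ 2
          + 2 * ∑ t ∈ Icc 1 k, η ^ 2 * ‖θ t‖ ^ 2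
          - 2 * ∑ t ∈ Icc 1 k, η * ⟪θ t, x t - xstar⟫ := by
  intro k _
  have htel : ∑ t ∈ Icc 1 k, (‖x t - xstar‖ ^ 2 - ‖x (t + 1) - xstar‖ ^ 2) =
      ‖x 1 - xstar‖ ^ 2 - ‖x (k + 1) - xstar‖ ^ 2 := by
    rw [← Ico_add_one_right_eq_Icc, ← neg_inj, ← sum_neg_distrib]
    simpa using sum_Ico_sub (fun t => ‖x t - xstar‖ ^ 2) (Nat.le_add_left 1 k)
  rw [← htel, mul_sum, mul_sum, ← sum_add_distrib, ← sum_sub_distrib]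
  refine sum_le_sum fun t ht => ?_
  rw [hupdate t (mem_Icc.1 ht).1, hθ t]
  exact inexact_gradient_step_bound hL hconv hdiff hsmooth hmin hη0 hη (x t) (gt t)
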